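/- Let G = K_{m,n} be the complete bipartite graph with vertex partition [m] ∪ [n], so that I(G) = (x_1,…,x_m)(y_1,…,y_n) in S = K[x_1,…,x_m,y_1,…,y_n]. Then all squarefree powers of I(G) have minimum depth: for every k with 1 ≤ k ≤ ν(G) = min(m,n), one has depth(S/I(G)^{[k]}) = 2k − 1. -/

import Mathlib

open MvPolynomial

section Preamble

variable (K : Type*) [Field K] {σ : Type*} [Fintype σ] [DecidableEq σ]

/-- A (monic) monomial of the polynomial ring. -/
def IsMonomial (f : MvPolynomial σ K) : Prop :=
  ∃ d : σ →₀ ℕ, f = monomial d 1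

/-- An ideal generated by monomials. -/
def IsMonomialIdeal (I : Ideal (MvPolynomial σ K)) : Prop :=
  ∃ A : Set (MvPolynomial σ K), (∀ u ∈ A, IsMonomial K u) ∧ I = Ideal.span A

/-- The unique minimal set of monomial generators `G(I)` of a monomial ideal:
the monomials of `I` that are minimal with respect to divisibility. -/
def minGens (I : Ideal (MvPolynomial σ K)) : Set (MvPolynomial σ K) :=
  {u | IsMonomial K u ∧ u ∈ I ∧ ∀ v, IsMonomial K v → v ∈ I → v ∣ u → v = u}

/-- A squarefree monomial ideal. -/
def IsSqfreeMonomialIdeal (I : Ideal (MvPolynomial σ K)) : Prop :=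
  IsMonomialIdeal K I ∧ ∀ u ∈ minGens K I, Squarefree u

/-- The `k`-th squarefree power `I^{[k]}`: the ideal generated by the squarefree
products of `k` minimal monomial generators of `I`. -/
noncomputable def sqPow (I : Ideal (MvPolynomial σ K)) (k : ℕ) : Ideal (MvPolynomial σ K) :=
  Ideal.span {u | Squarefree u ∧ ∃ l : List (MvPolynomial σ K),
    l.length = k ∧ (∀ f ∈ l, f ∈ minGens K I) ∧ u = l.prod}

/-- `ν(I)`: the maximum length of a regular sequence of monomials in `I`. -/
noncomputable def monNu (I : Ideal (MvPolynomial σ K)) : ℕ :=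
  sSup {m | ∃ l : List (MvPolynomial σ K), l.length = m ∧
    (∀ f ∈ l, IsMonomial K f ∧ f ∈ I) ∧
    RingTheory.Sequence.IsRegular (MvPolynomial σ K) l}

/-- The minimal degree `d` of a minimal monomial generator of `I`
(so `d_k = minDeg (I^{[k]})`). -/
noncomputable def minDeg (I : Ideal (MvPolynomial σ K)) : ℕ :=
  sInf (totalDegree '' minGens K I)

/-- `depth(S/I)`: the maximum length of an `S/I`-regular sequence of elements of
the graded maximal ideal `(x_1, …, x_n)`. -/
noncomputable def qdepth (I : Ideal (MvPolynomial σ K)) : ℕ :=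
  sSup {m | ∃ l : List (MvPolynomial σ K), l.length = m ∧
    (∀ f ∈ l, f ∈ Ideal.span (Set.range (X : σ → MvPolynomial σ K))) ∧
    RingTheory.Sequence.IsRegular (MvPolynomial σ K ⧸ I) l}

/-- `I` has linear quotients with respect to the ordering `L` of its minimal
monomial generators: each successive colon ideal is generated by variables. -/
def HasLinearQuotientsOrder (I : Ideal (MvPolynomial σ K))
    (L : List (MvPolynomial σ K)) : Prop :=
  L.Nodup ∧ (∀ u, u ∈ L ↔ u ∈ minGens K I) ∧
  ∀ i : Fin L.length, 0 < (i : ℕ) →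
    ∃ A : Set σ,
      Submodule.colon (Ideal.span {u | u ∈ L.take (i : ℕ)}) (Ideal.span {L.get i})
        = Ideal.span (X '' A)

/-- A monomial ideal with linear quotients. -/
def HasLinearQuotients (I : Ideal (MvPolynomial σ K)) : Prop :=
  ∃ L, HasLinearQuotientsOrder K I L

/-- A polymatroidal ideal: a monomial ideal generated in a single degree whose
minimal generators satisfy the exchange property. -/
def IsPolymatroidal (I : Ideal (MvPolynomial σ K)) : Prop :=
  IsMonomialIdeal K I ∧
  (∃ d, ∀ u ∈ minGens K I, totalDegree u = d) ∧
  ∀ u ∈ minGens K I, ∀ v ∈ minGens K I, ∀ k : σ,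
    degreeOf k v < degreeOf k u →
    ∃ l : σ, degreeOf l u < degreeOf l v ∧
      ∃ w, u = X k * w ∧ X l * w ∈ minGens K I

/-- A matroidal ideal: a polymatroidal ideal all of whose minimal generators are
squarefree. -/
def IsMatroidal (I : Ideal (MvPolynomial σ K)) : Prop :=
  IsPolymatroidal K I ∧ ∀ u ∈ minGens K I, Squarefree u

/-- The squarefree part of a monomial ideal: the ideal generated by its squarefree
minimal generators. -/
noncomputable def sqfPart (I : Ideal (MvPolynomial σ K)) : Ideal (MvPolynomial σ K) :=
  Ideal.span {u | u ∈ minGens K I ∧ Squarefree u}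

/-- The squarefree Veronese ideal `𝔪^{[d]}`, generated by all squarefree
monomials of degree `d`. -/
noncomputable def veronese (d : ℕ) : Ideal (MvPolynomial σ K) :=
  Ideal.span {u | ∃ F : Finset σ, F.card = d ∧ u = ∏ i ∈ F, X i}

/-- A chordal graph: no induced cycle of length greater than 3. -/
def IsChordal {V : Type*} (G : SimpleGraph V) : Prop :=
  ∀ m : ℕ, 4 ≤ m → ¬ ∃ f : ZMod m → V, Function.Injective f ∧
    ∀ i j : ZMod m, G.Adj (f i) (f j) ↔ (i = j + 1 ∨ j = i + 1)

/-- A matching of `G`: a finite set of pairwise vertex-disjoint edges of `G`. -/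
def IsMatching (G : SimpleGraph σ) (M : Finset (Sym2 σ)) : Prop :=
  (↑M ⊆ G.edgeSet) ∧ (M : Set (Sym2 σ)).Pairwise fun e f => ∀ v, v ∈ e → v ∉ f

/-- A `k`-matching of `G`. -/
def IsKMatching (G : SimpleGraph σ) (M : Finset (Sym2 σ)) (k : ℕ) : Prop :=
  IsMatching G M ∧ M.card = k

/-- The vertex set `V(M)` of a matching. -/
def mVerts (M : Finset (Sym2 σ)) : Finset σ :=
  Finset.univ.filter fun v => ∃ e ∈ M, v ∈ e

/-- The squarefree monomial `∏_{v ∈ V(M)} x_v` attached to a matching. -/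
noncomputable def matchMon (M : Finset (Sym2 σ)) : MvPolynomial σ K :=
  ∏ v ∈ mVerts M, X v

/-- The edge ideal `I(G)` of a finite simple graph `G`. -/
noncomputable def edgeIdeal (G : SimpleGraph σ) : Ideal (MvPolynomial σ K) :=
  Ideal.span {u | ∃ i j, G.Adj i j ∧ u = X i * X j}

/-- The `k`-th squarefree power `I(G)^{[k]}` of the edge ideal, generated by the
monomials `∏_{v ∈ V(M)} x_v` of the `k`-matchings `M` of `G`. -/
noncomputable def matchPow (G : SimpleGraph σ) (k : ℕ) : Ideal (MvPolynomial σ K) :=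
  Ideal.span {u | ∃ M : Finset (Sym2 σ), IsKMatching G M k ∧ u = matchMon K M}

/-- The matching number `ν(G)`. -/
noncomputable def matchNum (G : SimpleGraph σ) : ℕ :=
  sSup {k | ∃ M : Finset (Sym2 σ), IsKMatching G M k}

end Preamble

section ExtPart
open CategoryTheory Abelian
universe u
variable {R : Type u} [CommRing R]

/-- vanishing of Ext below `d` -/
def VB (N M : ModuleCat.{u} R) (d : ℕ) : Prop := ∀ i < d, Subsingleton (Ext N M i)

lemma VB.mono {N M : ModuleCat.{u} R} {d e : ℕ} (h : VB N M d) (he : e ≤ d) : VB N M e :=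
  fun i hi => h i (lt_of_lt_of_le hi he)

lemma vb_mid {N : ModuleCat.{u} R} {S : ShortComplex (ModuleCat.{u} R)} (hS : S.ShortExact)
    {d : ℕ} (h1 : VB N S.X₁ d) (h3 : VB N S.X₃ d) : VB N S.X₂ d := by
  intro i hi
  have := h1 i hi
  have := h3 i hi
  refine subsingleton_of_forall_eq 0 fun x => ?_
  obtain ⟨y, hy⟩ := Ext.covariant_sequence_exact₂ N hS x (Subsingleton.elim _ _)
  rw [← hy, Subsingleton.elim y 0, Ext.zero_comp]

lemma nontriv_mid {N : ModuleCat.{u} R} {S : ShortComplex (ModuleCat.{u} R)} (hS : S.ShortExact)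
    {d : ℕ} (h3 : VB N S.X₃ d) (h1 : Nontrivial (Ext N S.X₁ d)) : Nontrivial (Ext N S.X₂ d) := by
  by_contra hn
  rw [not_nontrivial_iff_subsingleton] at hn
  obtain ⟨x, hx⟩ := exists_ne (0 : Ext N S.X₁ d)
  apply hx
  rcases d with _ | d
  · have := hS.mono_f
    apply Ext.postcomp_mk₀_injective_of_mono N S.f
    exact Subsingleton.elim _ _
  · obtain ⟨y, hy⟩ := Ext.covariant_sequence_exact₁ N hS x (Subsingleton.elim _ _) rfl
    have := h3 d (Nat.lt_succ_self d)
    rw [← hy, Subsingleton.elim y 0, Ext.zero_comp]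

lemma vb_succ {N : ModuleCat.{u} R} {S : ShortComplex (ModuleCat.{u} R)} (hS : S.ShortExact)
    (hz : ∀ i (x : Ext N S.X₁ i), x.comp (Ext.mk₀ S.f) (add_zero i) = 0)
    {d : ℕ} (h3 : VB N S.X₃ d) : VB N S.X₁ (d + 1) := by
  intro i hi
  refine subsingleton_of_forall_eq 0 fun x => ?_
  rcases i with _ | i
  · have := hS.mono_f
    apply Ext.postcomp_mk₀_injective_of_mono N S.f
    have := hz 0 x
    simpa using this
  · obtain ⟨y, hy⟩ := Ext.covariant_sequence_exact₁ N hS x (hz _ _) rfl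
    have := h3 i (by omega)
    rw [← hy, Subsingleton.elim y 0, Ext.zero_comp]

lemma nontriv_succ {N : ModuleCat.{u} R} {S : ShortComplex (ModuleCat.{u} R)} (hS : S.ShortExact)
    {d : ℕ} (h2 : VB N S.X₂ (d + 1)) (h3 : Nontrivial (Ext N S.X₃ d)) :
    Nontrivial (Ext N S.X₁ (d + 1)) := by
  by_contra hn
  rw [not_nontrivial_iff_subsingleton] at hn
  obtain ⟨x, hx⟩ := exists_ne (0 : Ext N S.X₃ d)
  apply hx
  obtain ⟨y, hy⟩ := Ext.covariant_sequence_exact₃ N hS x rfl (Subsingleton.elim _ _)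
  have := h2 d (Nat.lt_succ_self d)
  rw [← hy, Subsingleton.elim y 0, Ext.zero_comp]

/-- the complex `R/J' → R/J → R/L`, first map multiplication by `a`. -/
noncomputable def quotSC (J' J L : Ideal R) (a : R) (h : ∀ f, a * f ∈ J ↔ f ∈ J')
    (hL : L = J ⊔ Ideal.span {a}) : ShortComplex (ModuleCat.{u} R) :=
  ShortComplex.mk (X₁ := ModuleCat.of R (R ⧸ J')) (X₂ := ModuleCat.of R (R ⧸ J))
    (X₃ := ModuleCat.of R (R ⧸ L))
    (ModuleCat.ofHom (Submodule.mapQ J' J (LinearMap.lsmul R R a) (fun f hf => (h f).2 hf)))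
    (ModuleCat.ofHom (Submodule.factor (p := J) (p' := L) (hL ▸ le_sup_left)))
    (by
      ext
      change Submodule.Quotient.mk (a * 1) = (0 : R ⧸ L)
      rw [Submodule.Quotient.mk_eq_zero, mul_one, hL]
      exact Ideal.mem_sup_right (Ideal.mem_span_singleton_self a))

lemma quotSC_exact (J' J L : Ideal R) (a : R) (h : ∀ f, a * f ∈ J ↔ f ∈ J')
    (hL : L = J ⊔ Ideal.span {a}) : (quotSC J' J L a h hL).ShortExact where
  exact := by
    rw [ShortComplex.moduleCat_exact_iff]
    intro x hx
    obtain ⟨x, rfl⟩ := Submodule.Quotient.mk_surjective _ x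
    change (Submodule.Quotient.mk x : R ⧸ L) = 0 at hx
    rw [Submodule.Quotient.mk_eq_zero, hL, Submodule.mem_sup] at hx
    obtain ⟨y, hy, z, hz, rfl⟩ := hx
    obtain ⟨c, rfl⟩ := Ideal.mem_span_singleton.1 hz
    refine ⟨Submodule.Quotient.mk c, ?_⟩
    change (Submodule.Quotient.mk (a * c) : R ⧸ J) = Submodule.Quotient.mk (y + a * c)
    rw [Submodule.Quotient.eq]
    simpa using hy
  mono_f := by
    rw [ModuleCat.mono_iff_injective, injective_iff_map_eq_zero]
    intro x hx
    obtain ⟨x, rfl⟩ := Submodule.Quotient.mk_surjective _ x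
    change (Submodule.Quotient.mk (a * x) : R ⧸ J) = 0 at hx
    rw [Submodule.Quotient.mk_eq_zero, h] at hx
    exact (Submodule.Quotient.mk_eq_zero _).2 hx
  epi_g := by
    rw [ModuleCat.epi_iff_surjective]
    exact Submodule.factor_surjective (hL ▸ le_sup_left : J ≤ L)

lemma quotSC_zero (N : ModuleCat.{u} R) (J L : Ideal R) (a : R) (h : ∀ f, a * f ∈ J ↔ f ∈ J)
    (hL : L = J ⊔ Ideal.span {a}) (ha : a ∈ Module.annihilator R N) (i : ℕ)
    (x : Ext N (quotSC J J L a h hL).X₁ i) :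
    x.comp (Ext.mk₀ (quotSC J J L a h hL).f) (add_zero i) = 0 := by
  have e : (quotSC J J L a h hL).f = a • 𝟙 (ModuleCat.of R (R ⧸ J)) := by
    ext
    rfl
  have := Ext.postcomp_smul_id_eq_zero_of_mem_annihilator (M := ModuleCat.of R (R ⧸ J)) (N := N) ha i
  have h2 := congrArg (fun g => g.hom x) this
  rw [e]
  exact h2

/-- depth via Ext -/
def HD (N M : ModuleCat.{u} R) (d : ℕ) : Prop := VB N M d ∧ Nontrivial (Ext N M d)

lemma vb_step (N : ModuleCat.{u} R) (St D Dl Lk : Ideal R) (a : R)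
    (ha : a ∈ Module.annihilator R N)
    (h : ∀ f, a * f ∈ D ↔ f ∈ St) (hD : Dl = D ⊔ Ideal.span {a})
    (h' : ∀ f, a * f ∈ St ↔ f ∈ St) (hL : Lk = St ⊔ Ideal.span {a}) {d : ℕ}
    (v1 : VB N (ModuleCat.of R (R ⧸ Lk)) d) (v2 : VB N (ModuleCat.of R (R ⧸ Dl)) (d + 1)) :
    VB N (ModuleCat.of R (R ⧸ D)) (d + 1) :=
  vb_mid (quotSC_exact St D Dl a h hD)
    (vb_succ (quotSC_exact St St Lk a h' hL) (quotSC_zero N St Lk a h' hL ha) v1) v2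

lemma hd_step (N : ModuleCat.{u} R) (St D Dl Lk : Ideal R) (a : R)
    (ha : a ∈ Module.annihilator R N)
    (h : ∀ f, a * f ∈ D ↔ f ∈ St) (hD : Dl = D ⊔ Ideal.span {a})
    (h' : ∀ f, a * f ∈ St ↔ f ∈ St) (hL : Lk = St ⊔ Ideal.span {a}) {d : ℕ}
    (v1 : HD N (ModuleCat.of R (R ⧸ Lk)) d) (v2 : VB N (ModuleCat.of R (R ⧸ Dl)) (d + 1)) :
    HD N (ModuleCat.of R (R ⧸ D)) (d + 1) := by
  have v3 := vb_succ (quotSC_exact St St Lk a h' hL) (quotSC_zero N St Lk a h' hL ha) v1.1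
  exact ⟨vb_mid (quotSC_exact St D Dl a h hD) v3 v2,
    nontriv_mid (quotSC_exact St D Dl a h hD) v2
      (nontriv_succ (quotSC_exact St St Lk a h' hL) v3 v1.2)⟩

/-- Mayer-Vietoris complex -/
noncomputable def mvSC (J P Q L : Ideal R) (h : J = P ⊓ Q) (hL : L = P ⊔ Q) :
    ShortComplex (ModuleCat.{u} R) :=
  ShortComplex.mk (X₁ := ModuleCat.of R (R ⧸ J)) (X₂ := ModuleCat.of R ((R ⧸ P) × (R ⧸ Q)))
    (X₃ := ModuleCat.of R (R ⧸ L))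
    (ModuleCat.ofHom ((Submodule.factor (p := J) (p' := P) (h ▸ inf_le_left)).prod
      (Submodule.factor (p := J) (p' := Q) (h ▸ inf_le_right))))
    (ModuleCat.ofHom ((Submodule.factor (p := P) (p' := L) (hL ▸ le_sup_left)).comp
        (LinearMap.fst R _ _) -
      (Submodule.factor (p := Q) (p' := L) (hL ▸ le_sup_right)).comp (LinearMap.snd R _ _)))
    (by
      ext
      change (Submodule.Quotient.mk 1 : R ⧸ L) - Submodule.Quotient.mk 1 = 0
      simp)

lemma mvSC_exact (J P Q L : Ideal R) (h : J = P ⊓ Q) (hL : L = P ⊔ Q) :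
    (mvSC J P Q L h hL).ShortExact where
  exact := by
    rw [ShortComplex.moduleCat_exact_iff]
    rintro ⟨x, y⟩ hx
    obtain ⟨x, rfl⟩ := Submodule.Quotient.mk_surjective _ x
    obtain ⟨y, rfl⟩ := Submodule.Quotient.mk_surjective _ y
    change (Submodule.Quotient.mk x : R ⧸ L) - Submodule.Quotient.mk y = 0 at hx
    rw [← Submodule.Quotient.mk_sub, Submodule.Quotient.mk_eq_zero, hL, Submodule.mem_sup] at hx
    obtain ⟨p, hp, q, hq, e⟩ := hx
    refine ⟨Submodule.Quotient.mk (x - p), ?_⟩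
    change ((Submodule.Quotient.mk (x - p) : R ⧸ P), (Submodule.Quotient.mk (x - p) : R ⧸ Q)) =
      (Submodule.Quotient.mk x, Submodule.Quotient.mk y)
    rw [Prod.mk.injEq, Submodule.Quotient.eq, Submodule.Quotient.eq]
    constructor
    · simpa using hp
    · have : x - p - y = q := by linear_combination -e
      rwa [this]
  mono_f := by
    rw [ModuleCat.mono_iff_injective, injective_iff_map_eq_zero]
    intro x hx
    obtain ⟨x, rfl⟩ := Submodule.Quotient.mk_surjective _ x
    change ((Submodule.Quotient.mk x : R ⧸ P), (Submodule.Quotient.mk x : R ⧸ Q)) = 0 at hx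
    rw [Prod.mk_eq_zero, Submodule.Quotient.mk_eq_zero, Submodule.Quotient.mk_eq_zero] at hx
    refine (Submodule.Quotient.mk_eq_zero _).2 ?_
    rw [h]
    exact hx
  epi_g := by
    rw [ModuleCat.epi_iff_surjective]
    intro z
    obtain ⟨z, rfl⟩ := Submodule.Quotient.mk_surjective _ z
    refine ⟨(Submodule.Quotient.mk z, 0), ?_⟩
    change (Submodule.Quotient.mk z : R ⧸ L) - Submodule.Quotient.mk 0 = Submodule.Quotient.mk z
    simp

lemma hom_zero_of_vb {N M : ModuleCat.{u} R} (h : VB N M 1) : Subsingleton (N →ₗ[R] M) := by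
  have := h 0 one_pos
  have : Subsingleton (N ⟶ M) := Ext.addEquiv₀.symm.subsingleton
  exact ModuleCat.homAddEquiv.symm.subsingleton

lemma mv_hd (J P Q L : Ideal R) (h : J = P ⊓ Q) (hL : L = P ⊔ Q) (hne : L ≠ ⊤)
    (v1 : VB (ModuleCat.of R (R ⧸ L)) (ModuleCat.of R (R ⧸ P)) 1)
    (v2 : VB (ModuleCat.of R (R ⧸ L)) (ModuleCat.of R (R ⧸ Q)) 1) :
    HD (ModuleCat.of R (R ⧸ L)) (ModuleCat.of R (R ⧸ J)) 1 := by
  have s1 := hom_zero_of_vb v1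
  have s2 := hom_zero_of_vb v2
  have s3 : Subsingleton ((R ⧸ L) →ₗ[R] ((R ⧸ P) × (R ⧸ Q))) := by
    refine ⟨fun f g => ?_⟩
    apply LinearMap.ext
    intro x
    refine Prod.ext ?_ ?_
    · exact LinearMap.congr_fun (Subsingleton.elim (α := (R ⧸ L) →ₗ[R] (R ⧸ P))
        ((LinearMap.fst R _ _).comp f) ((LinearMap.fst R _ _).comp g)) x
    · exact LinearMap.congr_fun (Subsingleton.elim (α := (R ⧸ L) →ₗ[R] (R ⧸ Q))
        ((LinearMap.snd R _ _).comp f) ((LinearMap.snd R _ _).comp g)) x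
  have v3 : VB (ModuleCat.of R (R ⧸ L)) (mvSC J P Q L h hL).X₂ 1 := by
    intro i hi
    obtain rfl : i = 0 := by omega
    exact (Ext.addEquiv₀.trans ModuleCat.homAddEquiv).subsingleton_congr.2 s3
  have hex := mvSC_exact J P Q L h hL
  constructor
  · intro i hi
    obtain rfl : i = 0 := by omega
    have := hex.mono_f
    have := v3 0 one_pos
    exact (Ext.postcomp_mk₀_injective_of_mono _ (mvSC J P Q L h hL).f).subsingleton
  · refine nontriv_succ (d := 0) hex v3 ?_
    rw [(Ext.addEquiv₀.trans ModuleCat.homAddEquiv).nontrivial_congr]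
    have : Nontrivial (R ⧸ L) := Ideal.Quotient.nontrivial_iff.2 hne
    exact (inferInstance : Nontrivial ((R ⧸ L) →ₗ[R] (R ⧸ L)))

end ExtPart

section SR
set_option linter.unusedSectionVars false
set_option linter.unusedVariables false
set_option linter.unusedSimpArgs false
variable (K : Type*) [Field K] {σ : Type*} [Fintype σ] [DecidableEq σ]

/-- Stanley-Reisner ideal -/
noncomputable def SR (Δ : LowerSet (Finset σ)) : Ideal (MvPolynomial σ K) where
  carrier := {f | ∀ d, coeff d f ≠ 0 → d.support ∉ Δ}
  zero_mem' := by simp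
  add_mem' := by
    intro f g hf hg d hd
    by_cases h : coeff d f = 0
    · exact hg d (by simpa [h] using hd)
    · exact hf d h
  smul_mem' := by
    intro c f hf d hd
    rw [smul_eq_mul, coeff_mul] at hd
    obtain ⟨p, hp, hne⟩ := Finset.exists_ne_zero_of_sum_ne_zero hd
    rw [Finset.HasAntidiagonal.mem_antidiagonal] at hp
    intro hmem
    refine hf p.2 (right_ne_zero_of_mul hne) (Δ.lower ?_ hmem)
    rw [← hp]
    intro i hi
    simp only [Finsupp.mem_support_iff, Finsupp.add_apply] at hi ⊢
    omega

variable {K}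
lemma mem_SR {Δ : LowerSet (Finset σ)} {f : MvPolynomial σ K} :
    f ∈ SR K Δ ↔ ∀ d, coeff d f ≠ 0 → d.support ∉ Δ := Iff.rfl

lemma monomial_mem_SR {Δ : LowerSet (Finset σ)} {d : σ →₀ ℕ} {c : K} (h : d.support ∉ Δ) :
    monomial d c ∈ SR K Δ := by
  intro e he
  rw [coeff_monomial] at he
  split_ifs at he with h1
  · rwa [← h1]
  · simp at he

lemma SR_le {Δ : LowerSet (Finset σ)} {I : Ideal (MvPolynomial σ K)}
    (h : ∀ d : σ →₀ ℕ, ∀ c : K, d.support ∉ Δ → monomial d c ∈ I) : SR K Δ ≤ I := by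
  intro f hf
  rw [f.as_sum]
  refine Ideal.sum_mem _ fun d hd => h _ _ (hf d ?_)
  rwa [mem_support_iff] at hd

lemma SR_anti {Δ Γ : LowerSet (Finset σ)} (h : ∀ F, F ∈ Δ → F ∈ Γ) : SR K Γ ≤ SR K Δ :=
  fun _ hf d hd hm => hf d hd (h _ hm)

/-- star -/
def stC (v : σ) (Δ : LowerSet (Finset σ)) : LowerSet (Finset σ) :=
  ⟨{F | insert v F ∈ Δ}, fun _ _ hab ha => Δ.lower (Finset.insert_subset_insert v hab) ha⟩

/-- deletion -/
def dlC (v : σ) (Δ : LowerSet (Finset σ)) : LowerSet (Finset σ) :=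
  ⟨{F | v ∉ F ∧ F ∈ Δ}, fun _ _ hab ha => ⟨fun h => ha.1 (hab h), Δ.lower hab ha.2⟩⟩

lemma mem_stC {v : σ} {Δ : LowerSet (Finset σ)} {F} : F ∈ stC v Δ ↔ insert v F ∈ Δ := Iff.rfl
lemma mem_dlC {v : σ} {Δ : LowerSet (Finset σ)} {F} : F ∈ dlC v Δ ↔ v ∉ F ∧ F ∈ Δ := Iff.rfl

lemma stC_stC (v : σ) (Δ : LowerSet (Finset σ)) : stC v (stC v Δ) = stC v Δ := by
  ext F
  change F ∈ stC v (stC v Δ) ↔ F ∈ stC v Δ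
  simp [mem_stC]

lemma supp_single_add (v : σ) (d : σ →₀ ℕ) :
    (Finsupp.single v 1 + d).support = insert v d.support := by
  ext i
  by_cases h : i = v
  · subst h; simp
  · simp [h, Finsupp.single_apply, Ne.symm h]

lemma X_mul_mem_SR (v : σ) (Δ : LowerSet (Finset σ)) (f : MvPolynomial σ K) :
    X v * f ∈ SR K Δ ↔ f ∈ SR K (stC v Δ) := by
  constructor
  · intro h d hd hm
    refine h (Finsupp.single v 1 + d) ?_ ?_
    · rwa [coeff_X_mul]
    · rw [supp_single_add]; exact hm
  · intro h d hd hm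
    rw [coeff_X_mul'] at hd
    split_ifs at hd with hv
    · refine h _ hd ?_
      rw [mem_stC, ← supp_single_add, add_tsub_cancel_of_le]
      · exact hm
      · rw [Finsupp.single_le_iff]
        rw [Finsupp.mem_support_iff] at hv
        omega
    · exact hd rfl

lemma monomial_mem_of_X_mem {I : Ideal (MvPolynomial σ K)} {v : σ} (h : X v ∈ I) {d : σ →₀ ℕ}
    (hv : v ∈ d.support) (c : K) : monomial d c ∈ I := by
  have : monomial d c = monomial (d - Finsupp.single v 1) c * X v := by
    rw [X, monomial_mul, tsub_add_cancel_of_le, mul_one]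
    rw [Finsupp.single_le_iff]
    rw [Finsupp.mem_support_iff] at hv
    omega
  rw [this]
  exact I.mul_mem_left _ h

lemma X_mem_SR {Δ : LowerSet (Finset σ)} {v : σ} (h : {v} ∉ Δ) : (X v : MvPolynomial σ K) ∈ SR K Δ := by
  refine monomial_mem_SR ?_
  rwa [Finsupp.support_single _ one_ne_zero]

lemma SR_dlC (v : σ) (Δ : LowerSet (Finset σ)) :
    SR K (dlC v Δ) = SR K Δ ⊔ Ideal.span {X v} := by
  apply le_antisymm
  · refine SR_le fun d c hd => ?_
    by_cases hv : v ∈ d.support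
    · exact monomial_mem_of_X_mem (Ideal.mem_sup_right (Ideal.mem_span_singleton_self _)) hv c
    · refine Ideal.mem_sup_left (monomial_mem_SR fun hm => hd ⟨hv, hm⟩)
  · refine sup_le (SR_anti fun F hF => hF.2) ?_
    rw [Ideal.span_singleton_le_iff_mem]
    exact X_mem_SR fun h => h.1 (by simp)

lemma SR_sup (Δ Γ : LowerSet (Finset σ)) : SR K (Δ ⊔ Γ) = SR K Δ ⊓ SR K Γ := by
  apply le_antisymm
  · exact le_inf (SR_anti fun F h => Or.inl h) (SR_anti fun F h => Or.inr h)
  · rintro f ⟨h1, h2⟩ d hd hm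
    rcases hm with hm | hm
    · exact h1 d hd hm
    · exact h2 d hd hm

lemma SR_inf (Δ Γ : LowerSet (Finset σ)) : SR K (Δ ⊓ Γ) = SR K Δ ⊔ SR K Γ := by
  apply le_antisymm
  · refine SR_le fun d c hd => ?_
    by_cases h : d.support ∈ Δ
    · exact Ideal.mem_sup_right (monomial_mem_SR fun h' => hd ⟨h, h'⟩)
    · exact Ideal.mem_sup_left (monomial_mem_SR h)
  · exact sup_le (SR_anti fun F h => h.1) (SR_anti fun F h => h.2)

variable (K σ) in
/-- graded maximal ideal -/
noncomputable abbrev mm : Ideal (MvPolynomial σ K) :=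
  Ideal.span (Set.range (X : σ → MvPolynomial σ K))

lemma SR_empty : SR K (LowerSet.Iic (∅ : Finset σ)) = mm K σ := by
  apply le_antisymm
  · refine SR_le fun d c hd => ?_
    rw [LowerSet.mem_Iic_iff] at hd
    have : d.support.Nonempty := by
      rw [Finset.nonempty_iff_ne_empty]
      intro h
      exact hd (by rw [h])
    obtain ⟨v, hv⟩ := this
    exact monomial_mem_of_X_mem (Ideal.subset_span (Set.mem_range_self v)) hv c
  · rw [Ideal.span_le]
    rintro _ ⟨v, rfl⟩
    exact X_mem_SR (by simp)

lemma SR_le_mm {Δ : LowerSet (Finset σ)} (h : ∅ ∈ Δ) : SR K Δ ≤ mm K σ := by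
  rw [← SR_empty]
  refine SR_anti fun F hF => ?_
  rw [LowerSet.mem_Iic_iff] at hF
  rwa [Finset.subset_empty.1 hF]

lemma mm_ne_top : mm K σ ≠ ⊤ := by
  rw [Ne, Ideal.eq_top_iff_one, ← SR_empty]
  intro h
  exact h 0 (by simp) (by simp)

variable (K) in
/-- Ext vanishing -/
def VBS (Δ : LowerSet (Finset σ)) (d : ℕ) : Prop :=
  VB (ModuleCat.of (MvPolynomial σ K) (MvPolynomial σ K ⧸ mm K σ))
    (ModuleCat.of (MvPolynomial σ K) (MvPolynomial σ K ⧸ SR K Δ)) d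

variable (K) in
/-- depth -/
def HDS (Δ : LowerSet (Finset σ)) (d : ℕ) : Prop :=
  HD (ModuleCat.of (MvPolynomial σ K) (MvPolynomial σ K ⧸ mm K σ))
    (ModuleCat.of (MvPolynomial σ K) (MvPolynomial σ K ⧸ SR K Δ)) d

lemma X_ann (v : σ) : (X v : MvPolynomial σ K) ∈ Module.annihilator (MvPolynomial σ K)
    (ModuleCat.of (MvPolynomial σ K) (MvPolynomial σ K ⧸ mm K σ)) := by
  change _ ∈ Module.annihilator (MvPolynomial σ K) (MvPolynomial σ K ⧸ mm K σ)
  rw [Ideal.annihilator_quotient]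
  exact Ideal.subset_span ⟨v, rfl⟩

lemma hds_step (v : σ) (Δ : LowerSet (Finset σ)) {d : ℕ} (h1 : HDS K (dlC v (stC v Δ)) d)
    (h2 : VBS K (dlC v Δ) (d + 1)) : HDS K Δ (d + 1) :=
  hd_step _ (SR K (stC v Δ)) (SR K Δ) (SR K (dlC v Δ)) (SR K (dlC v (stC v Δ))) (X v) (X_ann v)
    (X_mul_mem_SR v Δ) (SR_dlC v Δ) (fun f => by rw [X_mul_mem_SR, stC_stC])
    (SR_dlC v (stC v Δ)) h1 h2

lemma vbs_simplex (Z : Finset σ) : VBS K (LowerSet.Iic Z) Z.card := by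
  induction Z using Finset.induction_on with
  | empty => intro i hi; simp at hi
  | insert v Z hv ih =>
    rw [Finset.card_insert_of_notMem hv]
    have e1 : stC v (LowerSet.Iic (insert v Z)) = LowerSet.Iic (insert v Z) := by
      ext F
      change F ∈ stC v (LowerSet.Iic (insert v Z)) ↔ F ∈ LowerSet.Iic (insert v Z)
      simp [mem_stC, Finset.insert_subset_iff]
    have e2 : dlC v (LowerSet.Iic (insert v Z)) = LowerSet.Iic Z := by
      ext F
      change F ∈ dlC v (LowerSet.Iic (insert v Z)) ↔ F ∈ LowerSet.Iic Z
      simp only [mem_dlC, LowerSet.mem_Iic_iff]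
      constructor
      · rintro ⟨h1, h2⟩
        exact (Finset.subset_insert_iff_of_notMem h1).1 h2
      · intro h
        exact ⟨fun h' => hv (h h'), h.trans (Finset.subset_insert _ _)⟩
    have h : ∀ f, X v * f ∈ SR K (LowerSet.Iic (insert v Z)) ↔
        f ∈ SR K (LowerSet.Iic (insert v Z)) := fun f => by rw [X_mul_mem_SR, e1]
    have hL := SR_dlC (K := K) v (LowerSet.Iic (insert v Z))
    rw [e2] at hL
    exact vb_succ (quotSC_exact _ _ _ _ h hL) (quotSC_zero _ _ _ _ h hL (X_ann v)) ih

/-- the complex -/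
def Gam (A : Finset σ) (k : ℕ) (B : Finset σ) (l : ℕ) : LowerSet (Finset σ) :=
  ⟨{F | F ⊆ A ∪ B ∧ ((F ∩ A).card < k ∨ (F ∩ B).card < l)}, by
    rintro F G (hGF : G ⊆ F) ⟨h1, h2⟩
    refine ⟨hGF.trans h1, ?_⟩
    have h3 := Finset.card_le_card (Finset.inter_subset_inter_right (u := A) hGF)
    have h4 := Finset.card_le_card (Finset.inter_subset_inter_right (u := B) hGF)
    omega⟩

lemma mem_Gam {A B F : Finset σ} {k l : ℕ} :
    F ∈ Gam A k B l ↔ F ⊆ A ∪ B ∧ ((F ∩ A).card < k ∨ (F ∩ B).card < l) := Iff.rfl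

lemma Gam_symm (A B : Finset σ) (k l : ℕ) : Gam A k B l = Gam B l A k := by
  ext F
  change F ∈ Gam A k B l ↔ F ∈ Gam B l A k
  rw [mem_Gam, mem_Gam, Finset.union_comm, or_comm]

lemma sub_erase_union {A B F : Finset σ} {v : σ} (hB : v ∉ B) (h1 : v ∉ F) :
    F ⊆ A.erase v ∪ B ↔ F ⊆ A ∪ B := by
  constructor
  · exact fun h => h.trans (Finset.union_subset_union_left (Finset.erase_subset _ _))
  · intro h i hi
    have := h hi
    simp only [Finset.mem_union, Finset.mem_erase] at this ⊢
    rcases this with h2 | h2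
    · exact Or.inl ⟨fun e => h1 (e ▸ hi), h2⟩
    · exact Or.inr h2

lemma inter_erase_eq {A F : Finset σ} {v : σ} (h1 : v ∉ F) : F ∩ A.erase v = F ∩ A := by
  ext i
  simp only [Finset.mem_inter, Finset.mem_erase]
  constructor
  · tauto
  · rintro ⟨h2, h3⟩
    exact ⟨h2, fun e => h1 (e ▸ h2), h3⟩

lemma notMem_of_sub {A B F : Finset σ} {v : σ} (hB : v ∉ B) (h : F ⊆ A.erase v ∪ B) : v ∉ F := by
  intro hv
  have := h hv
  simp [hB] at this

lemma Gam_dl {A B : Finset σ} {v : σ} (hB : v ∉ B) (k l : ℕ) :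
    dlC v (Gam A k B l) = Gam (A.erase v) k B l := by
  ext F
  change F ∈ dlC v (Gam A k B l) ↔ F ∈ Gam (A.erase v) k B l
  rw [mem_dlC, mem_Gam, mem_Gam]
  constructor
  · rintro ⟨h1, h2, h3⟩
    rw [sub_erase_union hB h1, inter_erase_eq h1]
    exact ⟨h2, h3⟩
  · rintro ⟨h2, h3⟩
    have h1 := notMem_of_sub hB h2
    rw [sub_erase_union hB h1, inter_erase_eq h1] at *
    exact ⟨h1, h2, h3⟩

lemma Gam_lk {A B : Finset σ} {v : σ} (hA : v ∈ A) (hB : v ∉ B) (k l : ℕ) :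
    dlC v (stC v (Gam A (k + 1) B l)) = Gam (A.erase v) k B l := by
  ext F
  change F ∈ dlC v (stC v (Gam A (k + 1) B l)) ↔ F ∈ Gam (A.erase v) k B l
  rw [mem_dlC, mem_stC, mem_Gam, mem_Gam]
  have key : v ∉ F → (insert v F ⊆ A ∪ B ∧
      (((insert v F) ∩ A).card < k + 1 ∨ ((insert v F) ∩ B).card < l) ↔
      F ⊆ A ∪ B ∧ ((F ∩ A).card < k ∨ (F ∩ B).card < l)) := by
    intro h1
    rw [Finset.insert_subset_iff, Finset.insert_inter_of_mem hA, Finset.insert_inter_of_notMem hB,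
      Finset.card_insert_of_notMem (by simp [h1])]
    simp [hA]
  constructor
  · rintro ⟨h1, h2⟩
    rw [sub_erase_union hB h1, inter_erase_eq h1]
    exact (key h1).1 h2
  · rintro ⟨h2, h3⟩
    have h1 := notMem_of_sub hB h2
    rw [sub_erase_union hB h1] at h2
    rw [inter_erase_eq h1] at h3
    exact ⟨h1, (key h1).2 ⟨h2, h3⟩⟩

lemma Gam_full {A B : Finset σ} {k l : ℕ} (h : A.card < k) :
    Gam A k B l = LowerSet.Iic (A ∪ B) := by
  ext F
  change F ∈ Gam A k B l ↔ F ∈ LowerSet.Iic (A ∪ B)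
  rw [mem_Gam, LowerSet.mem_Iic_iff]
  have := Finset.card_le_card (Finset.inter_subset_right (s₁ := F) (s₂ := A))
  exact ⟨fun h => h.1, fun h2 => ⟨h2, Or.inl (by omega)⟩⟩

lemma Gam_base {A B : Finset σ} (hAB : Disjoint A B) (hA : 1 ≤ A.card) (hB : 1 ≤ B.card) :
    HDS K (Gam A 1 B 1) 1 := by
  have e : Gam A 1 B 1 = LowerSet.Iic A ⊔ LowerSet.Iic B := by
    ext F
    change F ∈ Gam A 1 B 1 ↔ F ∈ LowerSet.Iic A ∨ F ∈ LowerSet.Iic B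
    rw [mem_Gam, LowerSet.mem_Iic_iff, LowerSet.mem_Iic_iff]
    simp only [Nat.lt_one_iff, Finset.card_eq_zero]
    rw [← Finset.disjoint_iff_inter_eq_empty, ← Finset.disjoint_iff_inter_eq_empty]
    constructor
    · rintro ⟨h1, h2 | h2⟩
      · exact Or.inr (Disjoint.left_le_of_le_sup_left h1 h2)
      · exact Or.inl (Disjoint.left_le_of_le_sup_right h1 h2)
    · rintro (h | h)
      · exact ⟨h.trans Finset.subset_union_left, Or.inr (Disjoint.mono_left h hAB)⟩
      · exact ⟨h.trans Finset.subset_union_right, Or.inl (Disjoint.mono_left h hAB.symm)⟩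
  have e2 : LowerSet.Iic A ⊓ LowerSet.Iic B = LowerSet.Iic (∅ : Finset σ) := by
    rw [← LowerSet.Iic_inf]
    congr 1
    exact Finset.disjoint_iff_inter_eq_empty.1 hAB
  refine mv_hd _ (SR K (LowerSet.Iic A)) (SR K (LowerSet.Iic B)) (mm K σ) ?_ ?_ mm_ne_top
    ((vbs_simplex A).mono hA) ((vbs_simplex B).mono hB)
  · rw [e, SR_sup]
  · rw [← SR_inf, e2, SR_empty]

lemma Gam_step {A B : Finset σ} (hAB : Disjoint A B) (a b : ℕ) (hA : a + 2 ≤ A.card)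
    (hB : b + 1 ≤ B.card)
    (ih : ∀ A' : Finset σ, A'.card < A.card → Disjoint A' B → ∀ a', a' + 1 ≤ A'.card →
      HDS K (Gam A' (a' + 1) B (b + 1)) (a' + b + 1)) :
    HDS K (Gam A (a + 2) B (b + 1)) (a + 1 + b + 1) := by
  obtain ⟨v, hv⟩ := Finset.card_pos.1 (show 0 < A.card by omega)
  have hvB : v ∉ B := fun h => Finset.disjoint_left.1 hAB hv h
  have hd : Disjoint (A.erase v) B := Disjoint.mono_left (Finset.erase_subset _ _) hAB
  have hc := Finset.card_erase_of_mem hv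
  apply hds_step v
  · rw [Gam_lk hv hvB]
    have := ih (A.erase v) (by omega) hd a (by omega)
    rwa [show a + 1 + b = a + b + 1 by ring]
  · rw [Gam_dl hvB]
    by_cases h : a + 2 ≤ (A.erase v).card
    · exact (ih (A.erase v) (by omega) hd (a + 1) h).1
    · rw [Gam_full (by omega)]
      refine (vbs_simplex (K := K) _).mono ?_
      rw [Finset.card_union_of_disjoint hd]
      omega

variable (K) in
lemma Gam_hd (N : ℕ) : ∀ (A B : Finset σ), A.card + B.card ≤ N → Disjoint A B → ∀ a b : ℕ,
    a + 1 ≤ A.card → b + 1 ≤ B.card → HDS K (Gam A (a + 1) B (b + 1)) (a + b + 1) := by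
  induction N with
  | zero => intro A B _ _ a b _ _; omega
  | succ N ih =>
    intro A B hN hAB a b ha hb
    rcases a with _ | a
    · rcases b with _ | b
      · exact Gam_base hAB ha hb
      · rw [Gam_symm, add_comm 0 (b + 1)]
        refine Gam_step hAB.symm b 0 hb ha fun B' hB' hd b' hb' => ?_
        rw [Gam_symm, add_comm b' 0]
        exact ih A B' (by omega) hd.symm 0 b' ha hb'
    · refine Gam_step hAB a b ha hb fun A' hA' hd a' ha' => ?_
      exact ih A' B (by omega) hd a' b ha' hb

lemma qdepth_eq {Δ : LowerSet (Finset σ)} (h0 : ∅ ∈ Δ) {d : ℕ} (h : HDS K Δ d) :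
    qdepth K (SR K Δ) = d := by
  have hsm : mm K σ • (⊤ : Submodule (MvPolynomial σ K)
      (ModuleCat.of (MvPolynomial σ K) (MvPolynomial σ K ⧸ SR K Δ))) < ⊤ := by
    rw [lt_top_iff_ne_top]
    intro h
    apply mm_ne_top (K := K) (σ := σ)
    have h1 := congrArg (Submodule.comap (Submodule.mkQ (SR K Δ))) h
    have h2 := Submodule.comap_smul_top_of_surjective (mm K σ) _
      (Submodule.mkQ_surjective (SR K Δ))
    rw [Submodule.comap_top] at h1
    have h3 := h2.symm.trans h1
    simpa [SR_le_mm h0] using h3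
  have supp : Module.support (MvPolynomial σ K)
      (ModuleCat.of (MvPolynomial σ K) (MvPolynomial σ K ⧸ mm K σ)) =
      PrimeSpectrum.zeroLocus (mm K σ) := by
    change Module.support (MvPolynomial σ K) (MvPolynomial σ K ⧸ mm K σ) = _
    rw [Module.support_eq_zeroLocus, Ideal.annihilator_quotient]
  have f1 : Module.Finite (MvPolynomial σ K)
    (ModuleCat.of (MvPolynomial σ K) (MvPolynomial σ K ⧸ SR K Δ)) :=
    (inferInstance : Module.Finite (MvPolynomial σ K) (MvPolynomial σ K ⧸ SR K Δ))
  have f2 : Module.Finite (MvPolynomial σ K)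
    (ModuleCat.of (MvPolynomial σ K) (MvPolynomial σ K ⧸ mm K σ)) :=
    (inferInstance : Module.Finite (MvPolynomial σ K) (MvPolynomial σ K ⧸ mm K σ))
  apply IsGreatest.csSup_eq
  constructor
  · exact ModuleCat.exists_isRegular_of_exists_subsingleton_ext (mm K σ) d _ hsm _ supp h.1
  · rintro _ ⟨l, rfl, hl, hr⟩
    by_contra! hlt
    have := ModuleCat.subsingleton_ext_of_exists_isRegular (mm K σ) _ supp.subset _ hsm l hl hr
      d hlt
    exact not_nontrivial _ h.2

end SR

section Comb
variable {m n : ℕ}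

lemma exists_inl {e : Sym2 (Fin m ⊕ Fin n)}
    (he : e ∈ (completeBipartiteGraph (Fin m) (Fin n)).edgeSet) : ∃ a, Sum.inl a ∈ e := by
  induction e using Sym2.ind with
  | _ x y =>
    rcases x with x | x
    · exact ⟨x, by simp⟩
    · rcases y with y | y
      · exact ⟨y, by simp⟩
      · simp at he

lemma exists_inr {e : Sym2 (Fin m ⊕ Fin n)}
    (he : e ∈ (completeBipartiteGraph (Fin m) (Fin n)).edgeSet) : ∃ a, Sum.inr a ∈ e := by
  induction e using Sym2.ind with
  | _ x y =>
    rcases x with x | x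
    · rcases y with y | y
      · simp at he
      · exact ⟨y, by simp⟩
    · exact ⟨x, by simp⟩

/-- left vertices -/
def LL (m n : ℕ) : Finset (Fin m ⊕ Fin n) := Finset.univ.map ⟨Sum.inl, Sum.inl_injective⟩
/-- right vertices -/
def RR (m n : ℕ) : Finset (Fin m ⊕ Fin n) := Finset.univ.map ⟨Sum.inr, Sum.inr_injective⟩

lemma card_LL : (LL m n).card = m := by simp [LL]
lemma card_RR : (RR m n).card = n := by simp [RR]
lemma disj_LR : Disjoint (LL m n) (RR m n) := by
  rw [Finset.disjoint_left]
  simp [LL, RR]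
lemma sub_LR (F : Finset (Fin m ⊕ Fin n)) : F ⊆ LL m n ∪ RR m n := by
  rintro (x | x) _ <;> simp [LL, RR]

lemma card_le_left {M : Finset (Sym2 (Fin m ⊕ Fin n))} {k : ℕ}
    (h : IsKMatching (completeBipartiteGraph (Fin m) (Fin n)) M k) :
    k ≤ (mVerts M ∩ LL m n).card := by
  obtain ⟨⟨h1, h2⟩, rfl⟩ := h
  rcases M.eq_empty_or_nonempty with rfl | ⟨e0, he0⟩
  · simp
  have : Nonempty (Fin m) := ⟨(exists_inl (h1 he0)).choose⟩
  choose! f hf using fun e (he : e ∈ M) => exists_inl (h1 he)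
  refine Finset.card_le_card_of_injOn (fun e => Sum.inl (f e)) ?_ ?_
  · intro e he
    have he' : e ∈ M := he
    simp only [mVerts, LL, Finset.coe_inter, Set.mem_inter_iff, Finset.mem_coe, Finset.mem_filter]
    exact ⟨⟨Finset.mem_univ _, e, he, hf e he⟩, by simp⟩
  · intro e he e' he' hee
    by_contra hne
    refine h2 he he' hne _ (hf e he) ?_
    have : Sum.inl (f e) = (Sum.inl (f e') : Fin m ⊕ Fin n) := hee
    rw [this]
    exact hf e' he'

lemma card_le_right {M : Finset (Sym2 (Fin m ⊕ Fin n))} {k : ℕ}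
    (h : IsKMatching (completeBipartiteGraph (Fin m) (Fin n)) M k) :
    k ≤ (mVerts M ∩ RR m n).card := by
  obtain ⟨⟨h1, h2⟩, rfl⟩ := h
  rcases M.eq_empty_or_nonempty with rfl | ⟨e0, he0⟩
  · simp
  have : Nonempty (Fin n) := ⟨(exists_inr (h1 he0)).choose⟩
  choose! f hf using fun e (he : e ∈ M) => exists_inr (h1 he)
  refine Finset.card_le_card_of_injOn (fun e => Sum.inr (f e)) ?_ ?_
  · intro e he
    have he' : e ∈ M := he
    simp only [mVerts, RR, Finset.coe_inter, Set.mem_inter_iff, Finset.mem_coe, Finset.mem_filter]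
    exact ⟨⟨Finset.mem_univ _, e, he, hf e he⟩, by simp⟩
  · intro e he e' he' hee
    by_contra hne
    refine h2 he he' hne _ (hf e he) ?_
    have : Sum.inr (f e) = (Sum.inr (f e') : Fin m ⊕ Fin n) := hee
    rw [this]
    exact hf e' he'

lemma exists_matching {k : ℕ} (F : Finset (Fin m ⊕ Fin n)) (h1 : k ≤ (F ∩ LL m n).card)
    (h2 : k ≤ (F ∩ RR m n).card) :
    ∃ M, IsKMatching (completeBipartiteGraph (Fin m) (Fin n)) M k ∧ mVerts M ⊆ F := by
  obtain ⟨A, hA, cA⟩ := Finset.exists_subset_card_eq h1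
  obtain ⟨B, hB, cB⟩ := Finset.exists_subset_card_eq h2
  have eA : ∀ i, ∃ a, (A.equivFinOfCardEq cA).symm i = (Sum.inl a : Fin m ⊕ Fin n) := by
    intro i
    have := Finset.mem_inter.1 (hA ((A.equivFinOfCardEq cA).symm i).2)
    obtain ⟨_, h⟩ := this
    simp only [LL, Finset.mem_map, Finset.mem_univ, true_and] at h
    obtain ⟨a, ha⟩ := h
    exact ⟨a, ha.symm⟩
  have eB : ∀ i, ∃ a, (B.equivFinOfCardEq cB).symm i = (Sum.inr a : Fin m ⊕ Fin n) := by
    intro i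
    have := Finset.mem_inter.1 (hB ((B.equivFinOfCardEq cB).symm i).2)
    obtain ⟨_, h⟩ := this
    simp only [RR, Finset.mem_map, Finset.mem_univ, true_and] at h
    obtain ⟨a, ha⟩ := h
    exact ⟨a, ha.symm⟩
  choose f hf using eA
  choose g hg using eB
  have fi : Function.Injective f := by
    intro i j hij
    apply (A.equivFinOfCardEq cA).symm.injective
    apply Subtype.ext
    rw [hf, hf, hij]
  have gi : Function.Injective g := by
    intro i j hij
    apply (B.equivFinOfCardEq cB).symm.injective
    apply Subtype.ext
    rw [hg, hg, hij]
  refine ⟨Finset.univ.image fun i : Fin k => s(Sum.inl (f i), Sum.inr (g i)), ⟨⟨?_, ?_⟩, ?_⟩, ?_⟩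
  · intro e he
    simp only [Finset.coe_image, Set.mem_image] at he
    obtain ⟨i, _, rfl⟩ := he
    simp
  · intro e he e' he' hne v hv hv'
    simp only [Finset.coe_image, Set.mem_image] at he he'
    obtain ⟨i, _, rfl⟩ := he
    obtain ⟨j, _, rfl⟩ := he'
    apply hne
    have : i = j := by
      rw [Sym2.mem_iff] at hv hv'
      rcases hv with rfl | rfl
      · rcases hv' with h | h
        · exact fi (Sum.inl_injective h)
        · simp at h
      · rcases hv' with h | h
        · simp at h
        · exact gi (Sum.inr_injective h)
    rw [this]
  · rw [Finset.card_image_of_injective, Finset.card_univ, Fintype.card_fin]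
    intro i j hij
    simp at hij
    exact fi hij.1
  · intro v hv
    simp only [mVerts, Finset.mem_filter, Finset.mem_image] at hv
    obtain ⟨_, e, ⟨i, _, rfl⟩, hv⟩ := hv
    rw [Sym2.mem_iff] at hv
    rcases hv with rfl | rfl
    · rw [← hf]
      exact (Finset.mem_inter.1 (hA ((A.equivFinOfCardEq cA).symm i).2)).1
    · rw [← hg]
      exact (Finset.mem_inter.1 (hB ((B.equivFinOfCardEq cB).symm i).2)).1

lemma prod_X_eq {K : Type*} [Field K] {σ : Type*} [DecidableEq σ] (F : Finset σ) :
    (∏ v ∈ F, X v : MvPolynomial σ K) = monomial (∑ v ∈ F, Finsupp.single v 1) 1 := by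
  rw [monomial_sum_one]
  rfl

lemma supp_sum {σ : Type*} [DecidableEq σ] (F : Finset σ) :
    (∑ v ∈ F, (Finsupp.single v 1 : σ →₀ ℕ)).support = F := by
  ext i
  simp [Finsupp.finsetSum_apply, Finsupp.single_apply]

lemma matchPow_eq {K : Type*} [Field K] (k : ℕ) :
    matchPow K (completeBipartiteGraph (Fin m) (Fin n)) k = SR K (Gam (LL m n) k (RR m n) k) := by
  apply le_antisymm
  · rw [matchPow, Ideal.span_le]
    rintro _ ⟨M, hM, rfl⟩
    rw [matchMon, prod_X_eq]
    refine monomial_mem_SR ?_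
    rw [supp_sum, mem_Gam]
    have := card_le_left hM
    have := card_le_right hM
    omega
  · refine SR_le fun d c hd => ?_
    rw [mem_Gam] at hd
    have h3 : ¬ ((d.support ∩ LL m n).card < k ∨ (d.support ∩ RR m n).card < k) :=
      fun h => hd ⟨sub_LR _, h⟩
    obtain ⟨M, hM, hs⟩ := exists_matching (k := k) d.support (by omega) (by omega)
    have hle : (∑ v ∈ mVerts M, (Finsupp.single v 1 : _ →₀ ℕ)) ≤ d := by
      intro i
      by_cases hi : i ∈ mVerts M
      · have := hs hi
        rw [Finsupp.mem_support_iff] at this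
        simp only [Finsupp.finsetSum_apply, Finsupp.single_apply, Finset.sum_ite_eq', hi, if_true]
        omega
      · simp [Finsupp.finsetSum_apply, Finsupp.single_apply, hi]
    have : monomial d c = monomial (d - ∑ v ∈ mVerts M, (Finsupp.single v 1 : _ →₀ ℕ)) c *
        matchMon K M := by
      rw [matchMon, prod_X_eq, monomial_mul, tsub_add_cancel_of_le hle, mul_one]
    rw [this]
    exact Ideal.mul_mem_left _ _ (Ideal.subset_span ⟨M, hM, rfl⟩)

end Comb

/-- Let `G = K_{m,n}` be the complete bipartite graph. Then
`ν(G) = min(m, n)` and all squarefree powers of `I(G)` have minimum depth: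
`depth(S/I(G)^{[k]}) = 2k − 1` for all `1 ≤ k ≤ min(m, n)`. -/
theorem completeBipartite_min_depth {K : Type*} [Field K] (m n : ℕ) :
    matchNum (completeBipartiteGraph (Fin m) (Fin n)) = min m n ∧
    ∀ k : ℕ, 1 ≤ k → k ≤ min m n →
      qdepth K (matchPow K (completeBipartiteGraph (Fin m) (Fin n)) k)
        = 2 * k - 1 := by
  constructor
  · apply IsGreatest.csSup_eq
    constructor
    · obtain ⟨M, hM, _⟩ := exists_matching (m := m) (n := n) (k := min m n) Finset.univ
        (by rw [Finset.univ_inter, card_LL]; exact min_le_left _ _)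
        (by rw [Finset.univ_inter, card_RR]; exact min_le_right _ _)
      exact ⟨M, hM⟩
    · rintro k ⟨M, hM⟩
      refine le_min ((card_le_left hM).trans ?_) ((card_le_right hM).trans ?_)
      · exact (Finset.card_le_card Finset.inter_subset_right).trans card_LL.le
      · exact (Finset.card_le_card Finset.inter_subset_right).trans card_RR.le
  · intro k hk1 hk
    obtain ⟨a, rfl⟩ : ∃ a, k = a + 1 := ⟨k - 1, by omega⟩
    rw [le_min_iff] at hk
    rw [matchPow_eq]
    have h := Gam_hd K _ (LL m n) (RR m n) le_rfl disj_LR a a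
      (by rw [card_LL]; exact hk.1) (by rw [card_RR]; exact hk.2)
    rw [show 2 * (a + 1) - 1 = a + a + 1 by omega]
    refine qdepth_eq ?_ h
    rw [mem_Gam]
    simp
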